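/- Every finite (4,7)-biregular graph G has a cyclic interval t-coloring for some t ≤ 8. -/

import Mathlib

open SimpleGraph

/-- The set of colors appearing on edges incident to `v` under the edge coloring `c`. -/
def colorsAt {V : Type*} (G : SimpleGraph V) (c : Sym2 V → ℕ) (v : V) : Set ℕ :=
  c '' (G.incidenceSet v)

/-- A set of natural numbers is an interval of consecutive integers. -/
def IsIntervalSet (S : Set ℕ) : Prop := ∃ a b : ℕ, S = Set.Icc a b

/-- A proper edge coloring of `G` with colors `1, …, t`: every edge gets a color in
`{1, …, t}` and distinct edges sharing a vertex get distinct colors. -/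
def IsProperEdgeColoring {V : Type*} (G : SimpleGraph V) (t : ℕ) (c : Sym2 V → ℕ) : Prop :=
  (∀ e ∈ G.edgeSet, c e ∈ Set.Icc 1 t) ∧
  ∀ e₁ ∈ G.edgeSet, ∀ e₂ ∈ G.edgeSet, e₁ ≠ e₂ → (∃ v, v ∈ e₁ ∧ v ∈ e₂) → c e₁ ≠ c e₂

/-- A cyclic interval `t`-coloring of `G`: a proper edge coloring with colors `1, …, t`
such that at every vertex the set of incident colors, or its complement in `{1, …, t}`,
is an interval of consecutive integers. -/
def IsCyclicIntervalColoring {V : Type*} (G : SimpleGraph V) (t : ℕ) (c : Sym2 V → ℕ) : Prop :=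
  IsProperEdgeColoring G t c ∧
  ∀ v : V, IsIntervalSet (colorsAt G c v) ∨ IsIntervalSet (Set.Icc 1 t \ colorsAt G c v)

/-- An `(a,b)`-biregular graph: the vertex set is partitioned into two nonempty
independent parts `X` and `Xᶜ`, every edge joins the parts, every vertex of `X`
has degree `a`, and every vertex of `Xᶜ` has degree `b`. -/
def IsBiregular {V : Type*} [Fintype V] (G : SimpleGraph V) [DecidableRel G.Adj]
    (a b : ℕ) : Prop :=
  ∃ X : Set V, X.Nonempty ∧ Xᶜ.Nonempty ∧
    (∀ u v : V, G.Adj u v → (u ∈ X ↔ v ∉ X)) ∧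
    (∀ v ∈ X, G.degree v = a) ∧ (∀ v ∈ Xᶜ, G.degree v = b)

/-!
Colours are triples of bits, built by repeated halving. Pairing up the edges at each vertex of `X`
and at each vertex of `Y` gives two involutions of the edge set; the graph they generate consists of
paths and even cycles, so it is two-colourable, and a two-colouring halves all edge sets at all
vertices at once. Three bits obtained in this way would suffice for a proper colouring of a graph
with degrees at most `8`. The cyclic interval condition at the vertices of `X` is obtained by making
one of the bits constant on the pairs left after the first halving: two bits that both separate
these pairs have a sum that does not. At a vertex of `Y` at most one of the eight colours is
missing.
-/

section Halving

open Function Set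

variable {Q E A B : Type*}

theorem exists_bool_apply_ne {σ : Q → Q} (hσ : Involutive σ) (hfree : ∀ x, σ x ≠ x) :
    ∃ f : Q → Bool, ∀ x, f (σ x) ≠ f x := by
  classical
  let _ : LinearOrder Q := linearOrderOfSTO WellOrderingRel
  refine ⟨fun x => decide (x < σ x), fun x => ?_⟩
  dsimp only
  rw [hσ x, ne_eq, decide_eq_decide, not_iff]
  exact not_lt.trans (hfree x).symm.le_iff_lt

theorem semiconjBy_mul_zpow_neg {M : Type*} [Group M] {a b : M} (ha : a * a = 1) (hb : b * b = 1)
    (n : ℤ) : SemiconjBy a ((a * b) ^ n) ((a * b) ^ (-n)) := by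
  have hinv : SemiconjBy a (a * b) (a * b)⁻¹ := by
    rw [SemiconjBy, mul_inv_rev, inv_mul_cancel_right, ← mul_assoc, ha, one_mul,
      inv_eq_of_mul_eq_one_left hb]
  simpa only [inv_zpow'] using hinv.zpow_right n

/- If `(s t)ⁿ e = s e`, then the midpoint of the walk from `e` to `s e` is fixed by `s` or by `t`,
according to the parity of `n`. -/
theorem not_sameCycle_mul_apply {s t : Equiv.Perm E} (hs : s * s = 1) (ht : t * t = 1)
    (hs_free : ∀ e, s e ≠ e) (ht_free : ∀ e, t e ≠ e) (e : E) :
    ¬ (s * t).SameCycle e (s e) := by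
  rintro ⟨n, hn⟩
  have reflect (m : ℤ) : s (((s * t) ^ m) e) = ((s * t) ^ (n - m)) e := by
    rw [← Equiv.Perm.mul_apply, (semiconjBy_mul_zpow_neg hs ht m).eq, Equiv.Perm.mul_apply, ← hn,
      ← Equiv.Perm.mul_apply, ← zpow_add, neg_add_eq_sub]
  obtain ⟨m, rfl | rfl⟩ := Int.even_or_odd' n
  · apply hs_free (((s * t) ^ m) e)
    rw [reflect, two_mul, add_sub_cancel_right]
  · apply ht_free (((s * t) ^ m) e)
    apply s.injective
    rw [reflect, ← Equiv.Perm.mul_apply, ← Equiv.Perm.mul_apply, ← zpow_one_add]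
    congr 2
    ring

theorem exists_bool_apply_ne_of_free {s t : E → E} (hs : Involutive s) (ht : Involutive t)
    (hs_free : ∀ e, s e ≠ e) (ht_free : ∀ e, t e ≠ e) :
    ∃ f : E → Bool, (∀ e, f (s e) ≠ f e) ∧ ∀ e, f (t e) ≠ f e := by
  let S := hs.toPerm
  let T := ht.toPerm
  have hS : S * S = 1 := Equiv.ext hs
  have hT : T * T = 1 := Equiv.ext ht
  let orbits := Equiv.Perm.SameCycle.setoid (S * T)
  have sameCycle_s {a b : E} : (S * T).SameCycle a b → (S * T).SameCycle (s a) (s b) := by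
    rintro ⟨n, rfl⟩
    exact ⟨-n, DFunLike.congr_fun (semiconjBy_mul_zpow_neg hS hT n).eq.symm a⟩
  let σ : Quotient orbits → Quotient orbits := Quotient.map s fun _ _ => sameCycle_s
  have hσ : Involutive σ := Quotient.ind fun e => congrArg (Quotient.mk orbits) (hs e)
  have hσ_free : ∀ x, σ x ≠ x := Quotient.ind fun e h =>
    not_sameCycle_mul_apply hS hT hs_free ht_free e (Quotient.exact h.symm)
  have mk_t (e : E) : Quotient.mk orbits (t e) = σ (Quotient.mk orbits e) :=
    Quotient.sound ⟨1, congrArg s (ht e)⟩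
  obtain ⟨f, hf⟩ := exists_bool_apply_ne hσ hσ_free
  refine ⟨fun e => f (Quotient.mk orbits e), fun e => hf (Quotient.mk orbits e), fun e => ?_⟩
  simpa only [mk_t] using hf (Quotient.mk orbits e)

/- On two copies of `E`, an involution becomes fixed-point free by exchanging the two copies of each
of its fixed points. -/
theorem exists_free_involutive_extension {s : E → E} (hs : Involutive s) :
    ∃ s' : E × Bool → E × Bool, Involutive s' ∧ (∀ x, s' x ≠ x) ∧
      ∀ e, s e ≠ e → s' (e, true) = (s e, true) := by
  classical
  refine ⟨fun x => if s x.1 = x.1 then (x.1, !x.2) else (s x.1, x.2), ?_, ?_, ?_⟩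
  · rintro ⟨e, b⟩
    by_cases h : s e = e
    · simp [h]
    · simp [h, hs e, Ne.symm h]
  · rintro ⟨e, b⟩
    by_cases h : s e = e <;> simp [h]
  · intro e h
    simp [h]

theorem exists_bool_apply_ne_of_involutive {s t : E → E} (hs : Involutive s) (ht : Involutive t) :
    ∃ f : E → Bool, (∀ e, s e ≠ e → f (s e) ≠ f e) ∧ ∀ e, t e ≠ e → f (t e) ≠ f e := by
  obtain ⟨s', hs', hs'_free, hs'_eq⟩ := exists_free_involutive_extension hs
  obtain ⟨t', ht', ht'_free, ht'_eq⟩ := exists_free_involutive_extension ht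
  obtain ⟨f, hfs, hft⟩ := exists_bool_apply_ne_of_free hs' ht' hs'_free ht'_free
  refine ⟨fun e => f (e, true), fun e he => ?_, fun e he => ?_⟩
  · simpa only [hs'_eq e he] using hfs (e, true)
  · simpa only [ht'_eq e he] using hft (e, true)

theorem exists_involutive_subsingleton_fixedPoints_congr {F : Type*} (g : E ≃ F) {s : F → F}
    (hs : Involutive s) (hfix : (fixedPoints s).Subsingleton) :
    ∃ s : E → E, Involutive s ∧ (fixedPoints s).Subsingleton := by
  refine ⟨g.symm ∘ s ∘ g, fun e => by simp [hs (g e)], fun x hx y hy => g.injective ?_⟩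
  exact hfix (g.symm_apply_eq.1 hx) (g.symm_apply_eq.1 hy)

theorem exists_involutive_subsingleton_fixedPoints (E : Type*) :
    ∃ s : E → E, Involutive s ∧ (fixedPoints s).Subsingleton := by
  cases finite_or_infinite E with
  | inl _ =>
    obtain ⟨n, ⟨g⟩⟩ := Finite.exists_equiv_fin E
    refine exists_involutive_subsingleton_fixedPoints_congr g Fin.rev_involutive ?_
    intro i hi j hj
    have hi := Fin.ext_iff.1 hi
    have hj := Fin.ext_iff.1 hj
    rw [Fin.val_rev] at hi hj
    omega
  | inr _ =>
    obtain ⟨g⟩ : Nonempty (E ⊕ E ≃ E) := Cardinal.eq.1 (by simp)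
    refine exists_involutive_subsingleton_fixedPoints_congr g.symm (s := Sum.swap)
      Sum.swap_swap ?_
    rintro (x | x) hx <;> cases hx

theorem exists_involutive_injOn_fixedPoints (p : E → A) :
    ∃ s : E → E, Involutive s ∧ (∀ e, p (s e) = p e) ∧ InjOn p (fixedPoints s) := by
  choose s hs hfix using fun a => exists_involutive_subsingleton_fixedPoints {e // p e = a}
  have eq_of_mem {a : A} {e : E} (h : p e = a) : (s (p e) ⟨e, rfl⟩ : E) = s a ⟨e, h⟩ := by
    subst h
    rfl
  have p_s (e : E) : p (s (p e) ⟨e, rfl⟩) = p e := (s (p e) ⟨e, rfl⟩).2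
  refine ⟨fun e => s (p e) ⟨e, rfl⟩, fun e => ?_, p_s, fun e he e' he' h => ?_⟩
  · dsimp only
    rw [eq_of_mem (p_s e), Subtype.coe_eta, hs]
  · have he : s (p e') ⟨e, h⟩ = ⟨e, h⟩ := Subtype.ext ((eq_of_mem h).symm.trans he)
    exact congrArg Subtype.val (hfix (p e') he (Subtype.ext he'))

/-- Every fibre of `p` has at most `k` elements. Reading `p` as the map taking an edge to one of its
ends, this bounds the degrees on one side of a bipartite multigraph; for a map into a product it
bounds the numbers of edges having a given end and given colour bits. -/
def FibersLE (p : E → A) (k : ℕ) : Prop :=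
  ∀ a, (p ⁻¹' {a}).encard ≤ k

/-- The bit `f` distributes every fibre of `p` evenly between its two values, as expressed by upper
bounds on the sizes of the fibres. -/
def Halves (f : E → Bool) (p : E → A) : Prop :=
  ∀ k, FibersLE p (2 * k) → FibersLE (fun e => (p e, f e)) k

theorem fibersLE_one_iff_injective {p : E → A} : FibersLE p 1 ↔ Injective p := by
  simp only [FibersLE, Nat.cast_one, encard_le_one_iff, mem_preimage, mem_singleton_iff]
  exact ⟨fun h e e' he => h (p e') e e' he rfl, fun h a e e' he he' => h (he.trans he'.symm)⟩

theorem FibersLE.of_finer {p : E → A} {q : E → B} {k : ℕ} (hp : FibersLE p k)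
    (h : ∀ e e', q e = q e' → p e = p e') : FibersLE q k := by
  intro b
  obtain hb | ⟨e, he⟩ := (q ⁻¹' {b}).eq_empty_or_nonempty
  · simp [hb]
  · exact (encard_le_encard fun e' he' => h e' e (he'.trans he.symm)).trans (hp (p e))

theorem FibersLE.forget_bool {p : E → A} {f : E → Bool} {k : ℕ}
    (h : FibersLE (fun e => (p e, f e)) k) : FibersLE p (2 * k) := by
  intro a
  have hcover : p ⁻¹' {a} ⊆
      (fun e => (p e, f e)) ⁻¹' {(a, true)} ∪ (fun e => (p e, f e)) ⁻¹' {(a, false)} := by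
    intro e he
    cases hfe : f e <;> simp_all
  calc (p ⁻¹' {a}).encard
      ≤ _ := encard_le_encard hcover
    _ ≤ _ := encard_union_le _ _
    _ ≤ k + k := add_le_add (h _) (h _)
    _ = (2 * k : ℕ) := by push_cast; ring

theorem le_of_add_le_two_mul_of_le_add_one {m n : ℕ∞} {k : ℕ} (hsum : m + n ≤ 2 * k)
    (hle : m ≤ n + 1) : m ≤ k := by
  enat_to_nat
  · rw [add_top, top_le_iff] at hsum
    exact absurd hsum (ENat.natCast_ne_top _)
  · omega

theorem halves_of_involutive {p : E → A} {s : E → E} (hs : Involutive s)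
    (hps : ∀ e, p (s e) = p e) (hfix : InjOn p (fixedPoints s)) {f : E → Bool}
    (hf : ∀ e, s e ≠ e → f (s e) ≠ f e) : Halves f p := by
  rintro k hk ⟨a, b⟩
  let half (b' : Bool) : Set E := (fun e => (p e, f e)) ⁻¹' {(a, b')}
  have hdisj : Disjoint (half b) (half !b) := by
    refine Set.disjoint_left.2 fun e he he' => ?_
    simp_all [half]
  have hsum : (half b).encard + (half !b).encard ≤ 2 * k := by
    rw [← encard_union_eq hdisj]
    refine (encard_le_encard ?_).trans (mod_cast hk a)
    rintro e (he | he) <;> exact (Prod.ext_iff.1 he).1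
  have hcover : half b ⊆ s '' half (!b) ∪ (half b ∩ fixedPoints s) := by
    intro e he
    by_cases hse : s e = e
    · exact Or.inr ⟨he, hse⟩
    · have hpe : p e = a := congrArg Prod.fst he
      have hfe : f e = b := congrArg Prod.snd he
      refine Or.inl ⟨s e, Prod.ext ((hps e).trans hpe) ?_, hs e⟩
      exact Bool.eq_not_of_ne (hfe ▸ hf e hse)
  have hfixed : (half b ∩ fixedPoints s).encard ≤ 1 := by
    rw [encard_le_one_iff]
    rintro e e' ⟨he, hse⟩ ⟨he', hse'⟩
    exact hfix hse hse' (congrArg Prod.fst (he.trans he'.symm))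
  have hle : (half b).encard ≤ (half !b).encard + 1 :=
    calc _ ≤ _ := encard_le_encard hcover
      _ ≤ _ := encard_union_le _ _
      _ ≤ _ := add_le_add (encard_image_le _ _) hfixed
  exact le_of_add_le_two_mul_of_le_add_one hsum hle

theorem exists_halves (p : E → A) (q : E → B) : ∃ f : E → Bool, Halves f p ∧ Halves f q := by
  obtain ⟨s, hs, hps, hsfix⟩ := exists_involutive_injOn_fixedPoints p
  obtain ⟨t, ht, hqt, htfix⟩ := exists_involutive_injOn_fixedPoints q
  obtain ⟨f, hfs, hft⟩ := exists_bool_apply_ne_of_involutive hs ht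
  exact ⟨f, halves_of_involutive hs hps hsfix hfs, halves_of_involutive ht hqt htfix hft⟩

theorem xor_eq_of_injective_prodMk {p : E → A} {u v : E → Bool}
    (hu : Injective fun e => (p e, u e)) (hv : Injective fun e => (p e, v e)) {e e' : E}
    (h : p e = p e') : (u e ^^ v e) = (u e' ^^ v e') := by
  by_cases hee' : e = e'
  · rw [hee']
  have hue : u e ≠ u e' := fun hue => hee' (hu (Prod.ext h hue))
  have hve : v e ≠ v e' := fun hve => hee' (hv (Prod.ext h hve))
  simp only [Bool.eq_not_of_ne hue, Bool.eq_not_of_ne hve, Bool.not_bne_not]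

theorem exists_three_bits {p : E → A} {q : E → B} (hp : FibersLE p 4) (hq : FibersLE q 8) :
    ∃ g f₁ f₂ : E → Bool, (∀ e e', (p e, f₁ e) = (p e', f₁ e') → g e = g e') ∧
      Injective (fun e => ((p e, f₁ e), f₂ e)) ∧
      Injective (fun e => (((q e, f₁ e), g e), f₂ e)) := by
  obtain ⟨f₁, hp₁, hq₁⟩ := exists_halves p q
  obtain ⟨u, hpu, hqu⟩ := exists_halves (fun e => (p e, f₁ e)) (fun e => (q e, f₁ e))
  obtain ⟨v, hpv, hqv⟩ := exists_halves (fun e => (p e, f₁ e)) (fun e => ((q e, f₁ e), u e))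
  let g e := u e ^^ v e
  have hp₁_two : FibersLE (fun e => (p e, f₁ e)) 2 := hp₁ 2 hp
  have hpu_inj := fibersLE_one_iff_injective.1 (hpu 1 hp₁_two)
  have hpv_inj := fibersLE_one_iff_injective.1 (hpv 1 hp₁_two)
  have hg : ∀ e e', (p e, f₁ e) = (p e', f₁ e') → g e = g e' := fun _ _ =>
    xor_eq_of_injective_prodMk hpu_inj hpv_inj
  have hquv : FibersLE (fun e => (((q e, f₁ e), u e), v e)) 1 := hqv 1 (hqu 2 (hq₁ 4 hq))
  have hqg : FibersLE (fun e => ((q e, f₁ e), g e)) 2 := by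
    have hqgu : FibersLE (fun e => (((q e, f₁ e), g e), u e)) 1 :=
      hquv.of_finer fun e e' h => by
        simp only [Prod.mk.injEq] at h ⊢
        obtain ⟨⟨hqf, huv⟩, hu⟩ := h
        refine ⟨⟨hqf, hu⟩, ?_⟩
        simpa only [g, hu, Bool.xor_right_inj] using huv
    exact hqgu.forget_bool
  obtain ⟨f₂, hp₂, hq₂⟩ := exists_halves (fun e => (p e, f₁ e)) (fun e => ((q e, f₁ e), g e))
  exact ⟨g, f₁, f₂, hg, fibersLE_one_iff_injective.1 (hp₂ 1 hp₁_two),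
    fibersLE_one_iff_injective.1 (hq₂ 1 hqg)⟩

end Halving

section Coloring

open Function Set

variable {E A B : Type*}

/-- The colour in `{1, …, 8}` given by three bits. The bits `g` and `j` select one of the blocks
`{1, 2}`, `{3, 4}`, `{5, 6}`, `{7, 8}`, in which `j` is the parity of the position of the block;
the bit `i` selects an element of that block. -/
def bitColor (g j i : Bool) : ℕ :=
  4 * g.toNat + 2 * j.toNat + i.toNat + 1

theorem bitColor_mem_Icc (g j i : Bool) : bitColor g j i ∈ Icc 1 8 := by
  revert g j i
  simp [bitColor]

theorem bitColor_inj {g j i g' j' i' : Bool} :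
    bitColor g j i = bitColor g' j' i' ↔ g = g' ∧ j = j' ∧ i = i' := by
  revert g j i g' j' i'
  decide

theorem isIntervalSet_of_subsingleton {S : Set ℕ} (hS : S.Subsingleton) : IsIntervalSet S := by
  obtain rfl | ⟨n, rfl⟩ := hS.eq_empty_or_singleton
  · exact ⟨1, 0, by simp⟩
  · exact ⟨n, n, by simp⟩

/- In the cyclic order of the four blocks, any two blocks of opposite parities are adjacent. -/
theorem isIntervalSet_range_bitColor_or_compl (γ : Bool → Bool) :
    IsIntervalSet (range fun b : Bool × Bool => bitColor (γ b.1) b.1 b.2) ∨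
      IsIntervalSet (Icc 1 8 \ range fun b : Bool × Bool => bitColor (γ b.1) b.1 b.2) := by
  have hrange : (range fun b : Bool × Bool => bitColor (γ b.1) b.1 b.2) =
      {bitColor (γ false) false false, bitColor (γ false) false true,
        bitColor (γ true) true false, bitColor (γ true) true true} := by
    ext n
    simp only [Set.mem_range, Prod.exists, Bool.exists_bool, or_assoc, mem_insert_iff,
      mem_singleton_iff, eq_comm]
  rw [hrange]
  cases γ false <;> cases γ true
  case' false.false => refine Or.inl ⟨1, 4, ?_⟩
  case' false.true => refine Or.inr ⟨3, 6, ?_⟩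
  case' true.false => refine Or.inl ⟨3, 6, ?_⟩
  case' true.true => refine Or.inl ⟨5, 8, ?_⟩
  all_goals
    ext n
    simp only [bitColor, Bool.toNat_false, Bool.toNat_true, mem_sdiff, mem_insert_iff,
      mem_singleton_iff, mem_Icc]
    omega

theorem image_eq_univ_of_encard_eq {β : Type*} [Finite β] {φ : E → β} {F : Set E}
    (hinj : InjOn φ F) (hF : F.encard = ENat.card β) : φ '' F = univ := by
  refine (toFinite _).eq_of_subset_of_encard_le (subset_univ _) ?_
  rw [hinj.encard_image, hF, encard_univ]

theorem isIntervalSet_image_bitColor_or_compl {F : Set E} (hF : F.encard = 4)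
    {g f₁ f₂ : E → Bool} (hg : ∀ e ∈ F, ∀ e' ∈ F, f₁ e = f₁ e' → g e = g e')
    (hinj : InjOn (fun e => (f₁ e, f₂ e)) F) :
    IsIntervalSet ((fun e => bitColor (g e) (f₁ e) (f₂ e)) '' F) ∨
      IsIntervalSet (Icc 1 8 \ (fun e => bitColor (g e) (f₁ e) (f₂ e)) '' F) := by
  have hbits := image_eq_univ_of_encard_eq hinj
    (hF.trans (by simp [ENat.card_eq_coe_fintype_card]))
  have hrep (j : Bool) : ∃ e ∈ F, f₁ e = j := by
    obtain ⟨e, he, hej⟩ := hbits.ge (mem_univ (j, false))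
    exact ⟨e, he, congrArg Prod.fst hej⟩
  choose rep rep_mem f₁_rep using hrep
  have himage : (fun e => bitColor (g e) (f₁ e) (f₂ e)) '' F =
      range fun b : Bool × Bool => bitColor (g (rep b.1)) b.1 b.2 := by
    rw [← image_univ, ← hbits, image_image]
    refine image_congr fun e he => ?_
    rw [hg e he _ (rep_mem (f₁ e)) (f₁_rep (f₁ e)).symm]
  rw [himage]
  exact isIntervalSet_range_bitColor_or_compl fun j => g (rep j)

theorem exists_cyclicInterval_coloring_of_fibersLE {p : E → A} {q : E → B}
    (hp : FibersLE p 4) (hq : FibersLE q 8) :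
    ∃ k : E → ℕ, (∀ e, k e ∈ Icc 1 8) ∧ (∀ a, InjOn k (p ⁻¹' {a})) ∧
      (∀ b, InjOn k (q ⁻¹' {b})) ∧ ∀ a, (p ⁻¹' {a}).encard = 4 →
        IsIntervalSet (k '' (p ⁻¹' {a})) ∨ IsIntervalSet (Icc 1 8 \ k '' (p ⁻¹' {a})) := by
  obtain ⟨g, f₁, f₂, hg, hp_inj, hq_inj⟩ := exists_three_bits hp hq
  have p_bits_inj (a : A) : InjOn (fun e => (f₁ e, f₂ e)) (p ⁻¹' {a}) := by
    rintro e rfl e' he' h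
    obtain ⟨h₁, h₂⟩ := Prod.mk.inj h
    exact hp_inj (Prod.ext (Prod.ext he'.symm h₁) h₂)
  refine ⟨fun e => bitColor (g e) (f₁ e) (f₂ e), fun e => bitColor_mem_Icc _ _ _, ?_, ?_, ?_⟩
  · intro a e he e' he' h
    obtain ⟨-, h₁, h₂⟩ := bitColor_inj.1 h
    exact p_bits_inj a he he' (Prod.ext h₁ h₂)
  · rintro b e rfl e' he' h
    obtain ⟨h₀, h₁, h₂⟩ := bitColor_inj.1 h
    exact hq_inj (Prod.ext (Prod.ext (Prod.ext he'.symm h₁) h₀) h₂)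
  · intro a ha
    refine isIntervalSet_image_bitColor_or_compl ha (fun e he e' he' h => ?_) (p_bits_inj a)
    exact hg e e' (Prod.ext (he.trans he'.symm) h)

theorem isIntervalSet_Icc_diff {S : Set ℕ} {t : ℕ} (hS : S ⊆ Icc 1 t) (ht : t ≤ S.encard + 1) :
    IsIntervalSet (Icc 1 t \ S) := by
  have hcard : S.encard + (Icc 1 t \ S).encard ≤ S.encard + 1 := by
    rw [add_comm, encard_sdiff_add_encard_of_subset hS, encard_eq_coe_toFinset_card, toFinset_Icc,
      Nat.card_Icc, Nat.add_sub_cancel]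
    exact ht
  have hfinite : S.encard ≠ ⊤ := encard_ne_top_iff.2 ((finite_Icc 1 t).subset hS)
  exact isIntervalSet_of_subsingleton
    (encard_le_one_iff_subsingleton.1 ((ENat.add_le_add_iff_left hfinite).1 hcard))

end Coloring

section Graph

open Function Set

variable {V : Type*} {G : SimpleGraph V} {X Y : Set V}

/-- The edges of `G` at the vertex `v`, as elements of the type of edges of `G`; this is
`G.incidenceSet v` regarded as a set in the subtype. -/
def edgesAt (G : SimpleGraph V) (v : V) : Set G.edgeSet :=
  {e | v ∈ (e : Sym2 V)}

theorem image_val_edgesAt (v : V) : Subtype.val '' edgesAt G v = G.incidenceSet v := by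
  ext e
  simp [edgesAt, incidenceSet, and_comm]

theorem encard_incidenceSet (v : V) [Fintype (G.neighborSet v)] :
    (G.incidenceSet v).encard = G.degree v := by
  classical
  rw [← card_incidenceSet_eq_degree, encard_eq_coe_toFinset_card, toFinset_card]

theorem encard_edgesAt (v : V) [Fintype (G.neighborSet v)] :
    (edgesAt G v).encard = G.degree v := by
  rw [← Subtype.val_injective.encard_image, image_val_edgesAt, encard_incidenceSet]

theorem incidenceSet_eq_empty (hG : G.IsBipartiteWith X Y) {v : V} (hX : v ∉ X) (hY : v ∉ Y) :
    G.incidenceSet v = ∅ := by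
  rw [eq_empty_iff_forall_notMem]
  rintro e ⟨he, w, rfl⟩
  exact (hG.mem_of_adj he).elim (fun h => hX h.1) (fun h => hY h.1)

theorem IsProperEdgeColoring.colorsAt_subset {t : ℕ} {c : Sym2 V → ℕ}
    (hc : IsProperEdgeColoring G t c) (v : V) : colorsAt G c v ⊆ Icc 1 t :=
  image_subset_iff.2 fun e he => hc.1 e he.1

theorem IsProperEdgeColoring.encard_colorsAt {t : ℕ} {c : Sym2 V → ℕ}
    (hc : IsProperEdgeColoring G t c) (v : V) [Fintype (G.neighborSet v)] :
    (colorsAt G c v).encard = G.degree v := by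
  have hinj : InjOn c (G.incidenceSet v) := fun e he e' he' h =>
    by_contra fun hne => hc.2 e he.1 e' he'.1 hne ⟨v, he.2, he'.2⟩ h
  rw [colorsAt, hinj.encard_image, encard_incidenceSet]

theorem colorsAt_extend (k : G.edgeSet → ℕ) (v : V) :
    colorsAt G (extend Subtype.val k 0) v = k '' edgesAt G v := by
  simp only [colorsAt, ← image_val_edgesAt, image_image, Subtype.val_injective.extend_apply]

theorem isProperEdgeColoring_extend {t : ℕ} {k : G.edgeSet → ℕ} (hk : ∀ e, k e ∈ Icc 1 t)
    (hinj : ∀ v, InjOn k (edgesAt G v)) : IsProperEdgeColoring G t (extend Subtype.val k 0) := by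
  have extend_eq {e : Sym2 V} (he : e ∈ G.edgeSet) : extend Subtype.val k 0 e = k ⟨e, he⟩ :=
    Subtype.val_injective.extend_apply k 0 ⟨e, he⟩
  refine ⟨fun e he => extend_eq he ▸ hk _, fun e he e' he' hne ⟨v, hv, hv'⟩ h => hne ?_⟩
  rw [extend_eq he, extend_eq he'] at h
  exact congrArg Subtype.val (hinj v hv hv' h)

theorem exists_endpoint_of_isBipartiteWith (hG : G.IsBipartiteWith X Y) :
    ∃ p : G.edgeSet → X, ∀ x : X, p ⁻¹' {x} = edgesAt G x := by
  have hedge (e : G.edgeSet) : ∃ y : X, ∀ x : X, y = x ↔ (x : V) ∈ (e : Sym2 V) := by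
    obtain ⟨e, he⟩ := e
    induction e with | _ a b
    have ne_of_mem {v : V} (hv : v ∈ Y) (x : X) : (x : V) ≠ v := hG.disjoint.ne_of_mem x.2 hv
    obtain ⟨ha, hb⟩ | ⟨ha, hb⟩ := hG.mem_of_adj he
    · exact ⟨⟨a, ha⟩, fun x => by simp [ne_of_mem hb x, Subtype.ext_iff, eq_comm]⟩
    · exact ⟨⟨b, hb⟩, fun x => by simp [ne_of_mem ha x, Subtype.ext_iff, eq_comm]⟩
  choose p hp using hedge
  exact ⟨p, fun x => Set.ext fun e => hp e x⟩

theorem exists_isProperEdgeColoring_cyclicInterval_on_left [G.LocallyFinite]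
    (hG : G.IsBipartiteWith X Y) (hX : ∀ v ∈ X, G.degree v = 4) (hY : ∀ v ∈ Y, G.degree v ≤ 8) :
    ∃ c : Sym2 V → ℕ, IsProperEdgeColoring G 8 c ∧ ∀ v ∈ X,
      IsIntervalSet (colorsAt G c v) ∨ IsIntervalSet (Icc 1 8 \ colorsAt G c v) := by
  obtain ⟨p, hp⟩ := exists_endpoint_of_isBipartiteWith hG
  obtain ⟨q, hq⟩ := exists_endpoint_of_isBipartiteWith hG.symm
  have card_p (x : X) : (p ⁻¹' {x}).encard = 4 := by
    rw [hp, encard_edgesAt, hX x x.2]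
    rfl
  have card_q (y : Y) : (q ⁻¹' {y}).encard ≤ 8 := by
    rw [hq, encard_edgesAt]
    exact mod_cast hY y y.2
  obtain ⟨k, hk, hkp, hkq, hk_interval⟩ :=
    exists_cyclicInterval_coloring_of_fibersLE (fun x => (card_p x).le) card_q
  refine ⟨extend Subtype.val k 0, isProperEdgeColoring_extend hk fun v => ?_, fun v hv => ?_⟩
  · by_cases hvX : v ∈ X
    · exact hp ⟨v, hvX⟩ ▸ hkp ⟨v, hvX⟩
    by_cases hvY : v ∈ Y
    · exact hq ⟨v, hvY⟩ ▸ hkq ⟨v, hvY⟩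
    have hempty : edgesAt G v = ∅ := image_eq_empty.1
      ((image_val_edgesAt v).trans (incidenceSet_eq_empty hG hvX hvY))
    exact hempty ▸ injOn_empty k
  · rw [colorsAt_extend, ← hp ⟨v, hv⟩]
    exact hk_interval ⟨v, hv⟩ (card_p ⟨v, hv⟩)

theorem stmt_12_general (G : SimpleGraph V) [G.LocallyFinite] (hG : G.IsBipartiteWith X Y)
    (hX : ∀ v ∈ X, G.degree v = 4) (hY : ∀ v ∈ Y, 7 ≤ G.degree v ∧ G.degree v ≤ 8) :
    ∃ c : Sym2 V → ℕ, IsCyclicIntervalColoring G 8 c := by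
  obtain ⟨c, hc, hcX⟩ :=
    exists_isProperEdgeColoring_cyclicInterval_on_left hG hX fun v hv => (hY v hv).2
  refine ⟨c, hc, fun v => ?_⟩
  by_cases hvX : v ∈ X
  · exact hcX v hvX
  by_cases hvY : v ∈ Y
  · refine Or.inr (isIntervalSet_Icc_diff (hc.colorsAt_subset v) ?_)
    rw [hc.encard_colorsAt]
    exact mod_cast Nat.add_le_add_right (hY v hvY).1 1
  · rw [colorsAt, incidenceSet_eq_empty hG hvX hvY, image_empty]
    exact Or.inl (isIntervalSet_of_subsingleton subsingleton_empty)

end Graph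

/-- every finite `(4,7)`-biregular graph has a cyclic interval `t`-coloring
for some `t ≤ 8`. -/
theorem stmt_12 {V : Type*} [Fintype V] (G : SimpleGraph V) [DecidableRel G.Adj]
    (hbireg : IsBiregular G 4 7) :
    ∃ t : ℕ, t ≤ 8 ∧ ∃ c : Sym2 V → ℕ, IsCyclicIntervalColoring G t c := by
  obtain ⟨X, -, -, hadj, hX, hY⟩ := hbireg
  have hG : G.IsBipartiteWith X Xᶜ :=
    ⟨disjoint_compl_right, fun u v huv => by have := hadj u v huv; tauto⟩
  obtain ⟨c, hc⟩ := stmt_12_general G hG hX fun v hv => by simp [hY v hv]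
  exact ⟨8, le_rfl, c, hc⟩
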